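/- arXiv:1804.03982 — 3 statements merged into one kernel-verified Lean document; each statement's English description precedes it below -/
import Mathlib

section
/- Fix nonnegative integers k₁ and k₂. For every nonnegative integer N, ∑_{m=0}^{N} binomial(2N+k₁+k₂, 2m+k₁) · binomial(2m+k₁, m) · binomial(2(N−m)+k₂, N−m) = binomial(k₁+k₂, k₁) · (k₁+k₂+1)_{2N}² / [(k₁+1)_N (k₂+1)_N (k₁+k₂+1)_N N!], where (a)_n = a(a+1)⋯(a+n−1) is the rising factorial. -/
/-- The rising factorial (Pochhammer symbol) over ℚ. -/
noncomputable def risingQ (a : ℚ) (n : ℕ) : ℚ := (ascPochhammer ℚ n).eval a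

/-!
With `i + j = N`, each summand is the multinomial coefficient counting the partitions of a
`(2N + k₁ + k₂)`-element set into blocks of sizes `i`, `i + k₁`, `j`, `j + k₂`. Choosing first the
union of the blocks of sizes `i` and `j + k₂`, whose size `N + k₂` does not depend on `i`, turns the
sum into a Vandermonde convolution, with value
`binom(2N + k₁ + k₂, N + k₂) * binom(2N + k₁ + k₂, N)`.
-/

open Finset Nat

lemma choose_mul_choose_mul_choose_mul_factorials (a b c d : ℕ) :
    (a + b + (c + d)).choose (a + b) * (a + b).choose a * (c + d).choose c *
      (a ! * b ! * c ! * d !) = (a + b + (c + d))! := by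
  rw [← add_choose_mul_factorial_mul_factorial (a + b) (c + d),
    ← add_choose_mul_factorial_mul_factorial a b, ← add_choose_mul_factorial_mul_factorial c d,
    choose_symm_add (a := a + b), choose_symm_add (a := a), choose_symm_add (a := c)]
  ring

lemma choose_mul_choose_mul_choose_swap (a b c d : ℕ) :
    (a + b + (c + d)).choose (a + b) * (a + b).choose a * (c + d).choose c =
      (a + d + (c + b)).choose (a + d) * (a + d).choose a * (c + b).choose c := by
  have hpos : 0 < a ! * b ! * c ! * d ! := by positivity
  refine Nat.eq_of_mul_eq_mul_right hpos ?_
  calc _ = (a + b + (c + d))! := choose_mul_choose_mul_choose_mul_factorials a b c d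
    _ = (a + d + (c + b))! := by congr 1; ring
    _ = _ := by rw [← choose_mul_choose_mul_choose_mul_factorials a d c b]; ring

lemma sum_antidiagonal_choose_mul_choose_mul_choose (k₁ k₂ N : ℕ) :
    ∑ ij ∈ antidiagonal N, (2 * N + k₁ + k₂).choose (2 * ij.1 + k₁) *
        (2 * ij.1 + k₁).choose ij.1 * (2 * ij.2 + k₂).choose ij.2 =
      (2 * N + k₁ + k₂).choose (N + k₂) * (2 * N + k₁ + k₂).choose N := by
  have summand_eq : ∀ ij ∈ antidiagonal N, (2 * N + k₁ + k₂).choose (2 * ij.1 + k₁) *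
        (2 * ij.1 + k₁).choose ij.1 * (2 * ij.2 + k₂).choose ij.2 =
      (2 * N + k₁ + k₂).choose (N + k₂) * ((N + k₂).choose ij.1 * (N + k₁).choose ij.2) := by
    rintro ⟨i, j⟩ hij
    obtain rfl : i + j = N := mem_antidiagonal.mp hij
    have swap_eq := choose_mul_choose_mul_choose_swap i (i + k₁) j (j + k₂)
    rwa [show i + (i + k₁) + (j + (j + k₂)) = 2 * (i + j) + k₁ + k₂ by ring,
      show i + (j + k₂) + (j + (i + k₁)) = 2 * (i + j) + k₁ + k₂ by ring,
      show i + (i + k₁) = 2 * i + k₁ by ring, show j + (j + k₂) = 2 * j + k₂ by ring,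
      show i + (j + k₂) = i + j + k₂ by ring, show j + (i + k₁) = i + j + k₁ by ring,
      mul_assoc (choose _ (i + j + k₂))] at swap_eq
  calc _ = (2 * N + k₁ + k₂).choose (N + k₂) *
        ∑ ij ∈ antidiagonal N, (N + k₂).choose ij.1 * (N + k₁).choose ij.2 := by
        rw [sum_congr rfl summand_eq, mul_sum]
    _ = (2 * N + k₁ + k₂).choose (N + k₂) * (N + k₂ + (N + k₁)).choose N := by
        rw [add_choose_eq (N + k₂)]
    _ = _ := by congr 2; ring

lemma risingQ_natCast_add_one (k n : ℕ) : risingQ (k + 1) n = ((k + n)! : ℚ) / k ! := by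
  rw [eq_div_iff (by positivity), mul_comm, ← factorial_mul_ascFactorial, cast_mul,
    cast_ascFactorial, cast_add_one, risingQ]

lemma choose_mul_choose_eq_risingQ (k₁ k₂ N : ℕ) :
    ((2 * N + k₁ + k₂).choose (N + k₂) * (2 * N + k₁ + k₂).choose N : ℚ) =
      ((k₁ + k₂).choose k₁ : ℚ) * (risingQ (k₁ + k₂ + 1) (2 * N)) ^ 2 /
        (risingQ (k₁ + 1) N * risingQ (k₂ + 1) N * risingQ (k₁ + k₂ + 1) N * (N ! : ℚ)) := by
  have choose_N_add_k₂ : ((2 * N + k₁ + k₂).choose (N + k₂) : ℚ) =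
      (k₁ + k₂ + 2 * N)! / ((k₂ + N)! * (k₁ + N)!) := by
    rw [add_comm N k₂, show 2 * N + k₁ + k₂ = k₂ + N + (k₁ + N) by ring, cast_add_choose]
    congr 3; ring
  have choose_N : ((2 * N + k₁ + k₂).choose N : ℚ) =
      (k₁ + k₂ + 2 * N)! / (N ! * (k₁ + k₂ + N)!) := by
    rw [show 2 * N + k₁ + k₂ = N + (k₁ + k₂ + N) by ring, cast_add_choose]
    congr 3; ring
  rw [choose_N_add_k₂, choose_N, cast_add_choose, ← cast_add]
  simp only [risingQ_natCast_add_one]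
  field_simp

theorem binom_sum_closed_form (k₁ k₂ : ℕ) (N : ℕ) :
    (∑ m ∈ Finset.range (N + 1),
        ((2 * N + k₁ + k₂).choose (2 * m + k₁) *
          (2 * m + k₁).choose m * (2 * (N - m) + k₂).choose (N - m) : ℚ)) =
      ((k₁ + k₂).choose k₁ : ℚ) * (risingQ (k₁ + k₂ + 1) (2 * N)) ^ 2 /
        (risingQ (k₁ + 1) N * risingQ (k₂ + 1) N * risingQ (k₁ + k₂ + 1) N *
          (Nat.factorial N : ℚ)) := by
  have sum_eq := sum_antidiagonal_choose_mul_choose_mul_choose k₁ k₂ N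
  rw [Finset.Nat.sum_antidiagonal_eq_sum_range_succ_mk] at sum_eq
  rw [← choose_mul_choose_eq_risingQ]
  exact_mod_cast sum_eq
end

section
/- Let k₁ ≤ k₂ be nonnegative integers with k₂ − k₁ ≤ 1, and 0 ≤ x < 1. Then Ξ₂^{[k₁,k₂]}(x) := (1/4) ∫₀^π ∫₀^π cos(k₁θ₁) cos(k₂θ₂)/√(1 + x² − x(cos θ₁ + cos θ₂)) dθ₁ dθ₂ equals (π² (1/2)_{k₁+k₂} (2x)^{k₁+k₂}) / (4^{k₁+k₂+1} k₁! k₂!) · ₃F₂(1/2, k₁+1/2, k₁+k₂+1/2; k₂+1, k₁+k₂+1; −x²). -/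
open Real

/-- The rising factorial (Pochhammer symbol) over ℝ. -/
noncomputable def rising (a : ℝ) (n : ℕ) : ℝ := (ascPochhammer ℝ n).eval a

/-- Clausen's generalized hypergeometric series ₃F₂(a₁,a₂,a₃;b₁,b₂;x). -/
noncomputable def clausen3F2 (a₁ a₂ a₃ b₁ b₂ x : ℝ) : ℝ :=
  ∑' n : ℕ, rising a₁ n * rising a₂ n * rising a₃ n /
    (rising b₁ n * rising b₂ n * n.factorial) * x ^ n

/-- The rank-2 Melnikov function Ξ₂^{[k₁,k₂]}. -/
noncomputable def Xi2 (k₁ k₂ : ℕ) (x : ℝ) : ℝ :=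
  (1 / 4) * ∫ θ₁ in (0:ℝ)..π, ∫ θ₂ in (0:ℝ)..π,
    Real.cos (k₁ * θ₁) * Real.cos (k₂ * θ₂) /
      Real.sqrt (1 + x ^ 2 - x * (Real.cos θ₁ + Real.cos θ₂))

/-!
With `t = (cos θ₁ + cos θ₂) / 2` the kernel `1 / √(1 - 2tx + x²)` is the generating function of
the Legendre polynomials, so the coefficient of `xⁿ` in `4 Ξ₂` is the moment of `Pₙ(t)` against
`cos k₁θ₁ cos k₂θ₂`. Both this expansion and the bound `|Pₙ| ≤ 1` allowing termwise integration
come from the factorization `1 - 2tx + x² = (1 - ex)(1 - e⁻¹x)` with `|e| = 1`.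

The moment of `(cos θ₁ + cos θ₂)ᴺ` counts nearest-neighbour walks on `ℤ²` to `(k₁, k₂)`; since the
four steps are the product of two `±1` steps along the diagonals, it is a product of two binomial
coefficients. If `k₂ - k₁ ∈ {0, 1}`, one of them is central or next to central, hence a ratio of
Pochhammer symbols at `1/2` and factorials, and the moment of `Pₙ` becomes a terminating
Saalschützian `₃F₂(1)`. The Pfaff–Saalschütz theorem evaluates it to one coefficient of the
claimed `₃F₂(-x²)`.
-/

open Finset.HasAntidiagonal (antidiagonal mem_antidiagonal)

section GeneratingFunction

open PowerSeries

variable (K : Type*) [Field K]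

/-- The coefficient `(1/2)ₙ / n!` of `zⁿ` in `(1 - z)^(-1/2)`, in the form `binom(2n, n) / 4ⁿ`,
which has no factorial in the denominator. -/
noncomputable def invSqrtCoeff (n : ℕ) : K := n.centralBinom / 4 ^ n

/-- The formal power series `(1 - X)^(-1/2)`. -/
noncomputable def invSqrtSeries : K⟦X⟧ := mk (invSqrtCoeff K)

variable {K}

/-- The Legendre polynomial `Pₙ(t)`. The exponent `p.1 - p.2` is a truncated subtraction, but the
binomial coefficient vanishes where it truncates. -/
noncomputable def legendre (n : ℕ) (t : K) : K :=
  ∑ p ∈ antidiagonal n,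
    (-1) ^ p.2 * invSqrtCoeff K p.1 * p.1.choose p.2 * (2 * t) ^ (p.1 - p.2)

lemma invSqrtCoeff_zero : invSqrtCoeff K 0 = 1 := by simp [invSqrtCoeff]

lemma constantCoeff_invSqrtSeries : constantCoeff (invSqrtSeries K) = 1 := by
  rw [← coeff_zero_eq_constantCoeff_apply, invSqrtSeries, coeff_mk, invSqrtCoeff_zero]

lemma coeff_C_mul_X_sub_X_sq_pow (y : K) (d n : ℕ) :
    coeff n ((C y * X - X ^ 2) ^ d) =
      if d ≤ n then (-1) ^ (n - d) * d.choose (n - d) * y ^ (d - (n - d)) else 0 := by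
  have h : C y * X - X ^ 2 = X * ((-(Polynomial.X + Polynomial.C (-y)) : Polynomial K) : K⟦X⟧) := by
    simp only [Polynomial.coe_neg, Polynomial.coe_add, Polynomial.coe_X, Polynomial.coe_C, map_neg]
    ring
  rw [h, mul_pow, coeff_X_pow_mul', ← Polynomial.coe_pow, Polynomial.coeff_coe, neg_pow,
    ← Polynomial.C_1, ← Polynomial.C_neg, ← Polynomial.C_pow, Polynomial.coeff_C_mul,
    Polynomial.coeff_X_add_C_pow]
  congr 1
  generalize n - d = k
  rcases le_or_gt k d with hk | hk
  · obtain ⟨m, rfl⟩ := Nat.exists_eq_add_of_le hk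
    have hsign : (-1 : K) ^ (k + m) * (-1) ^ m = (-1) ^ k := by
      rw [pow_add, mul_assoc, ← mul_pow, neg_one_mul, neg_neg, one_pow, mul_one]
    rw [Nat.add_sub_cancel_left, neg_pow y, ← hsign]
    ring
  · simp [Nat.choose_eq_zero_of_lt hk]

lemma hasSubst_C_mul_X_sub_X_sq (y : K) : HasSubst (C y * X - X ^ 2 : K⟦X⟧) :=
  HasSubst.of_constantCoeff_zero' (by simp)

lemma mk_legendre (t : K) :
    mk (legendre · t) = (invSqrtSeries K).subst (C (2 * t) * X - X ^ 2 : K⟦X⟧) := by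
  ext n
  rw [coeff_mk, coeff_subst' (hasSubst_C_mul_X_sub_X_sq _),
    finsum_eq_sum_of_support_subset (s := Finset.range (n + 1)), legendre,
    Finset.Nat.sum_antidiagonal_eq_sum_range_succ_mk]
  · refine Finset.sum_congr rfl fun d hd => ?_
    rw [coeff_C_mul_X_sub_X_sq_pow, if_pos (Finset.mem_range_succ_iff.1 hd), smul_eq_mul,
      invSqrtSeries, coeff_mk]
    ring
  · intro d hd
    contrapose! hd
    rw [Finset.coe_range, Set.mem_Iio, Nat.lt_succ_iff] at hd
    rw [Function.mem_support, not_not, coeff_C_mul_X_sub_X_sq_pow, if_neg hd, smul_zero]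

variable [CharZero K]

lemma succ_mul_invSqrtCoeff_succ (n : ℕ) :
    (n + 1) * invSqrtCoeff K (n + 1) = (n + 1 / 2) * invSqrtCoeff K n := by
  have h : ((n + 1) * (n + 1).centralBinom : K) = 2 * (2 * n + 1) * n.centralBinom := by
    exact_mod_cast n.succ_mul_centralBinom_succ
  rw [invSqrtCoeff, invSqrtCoeff, ← mul_div_assoc, h]
  field

lemma derivative_invSqrtSeries :
    2 * ((1 - X) * d⁄dX K (invSqrtSeries K)) = invSqrtSeries K := by
  ext n
  have h := succ_mul_invSqrtCoeff_succ (K := K) n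
  rw [show (2 : K⟦X⟧) = C 2 from (map_ofNat C 2).symm, coeff_C_mul, sub_mul, one_mul, map_sub]
  cases n with
  | zero =>
    simp only [coeff_derivative, invSqrtSeries, coeff_mk, coeff_zero_X_mul]
    push_cast at h ⊢
    linear_combination 2 * h
  | succ n =>
    simp only [coeff_derivative, invSqrtSeries, coeff_mk, coeff_succ_X_mul]
    push_cast at h ⊢
    linear_combination 2 * h

lemma one_sub_X_mul_invSqrtSeries_sq : (1 - X) * invSqrtSeries K ^ 2 = 1 := by
  refine derivative.ext ?_ (by simp [constantCoeff_invSqrtSeries])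
  simp only [Derivation.leibniz, Derivation.leibniz_pow, map_sub, derivative_one, derivative_X,
    smul_eq_mul, nsmul_eq_mul]
  push_cast
  linear_combination invSqrtSeries K * derivative_invSqrtSeries (K := K)

lemma sum_antidiagonal_invSqrtCoeff_mul (n : ℕ) :
    ∑ p ∈ antidiagonal n, invSqrtCoeff K p.1 * invSqrtCoeff K p.2 = 1 := by
  have h : invSqrtSeries K ^ 2 = PowerSeries.mk 1 := by
    rw [← one_mul (_ ^ 2), ← mk_one_mul_one_sub_eq_one K, mul_assoc,
      one_sub_X_mul_invSqrtSeries_sq, mul_one]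
  simpa [sq, coeff_mul, invSqrtSeries] using congrArg (coeff n) h

lemma eq_of_mul_sq_eq_one {u A B : K⟦X⟧} (hA : u * A ^ 2 = 1) (hB : u * B ^ 2 = 1)
    (h : constantCoeff A = constantCoeff B) : A = B := by
  have hu : u ≠ 0 := left_ne_zero_of_mul_eq_one hA
  rcases sq_eq_sq_iff_eq_or_eq_neg.1 (mul_left_cancel₀ hu (hA.trans hB.symm)) with hAB | rfl
  · exact hAB
  · have hB0 : constantCoeff B = 0 := by
      rw [map_neg] at h
      exact self_eq_neg.1 h.symm
    simpa [hB0] using congrArg constantCoeff hB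

lemma mul_mk_legendre_sq (t : K) :
    (1 - C (2 * t) * X + X ^ 2) * mk (legendre · t) ^ 2 = 1 := by
  have ha := hasSubst_C_mul_X_sub_X_sq (2 * t)
  have h := congrArg (substAlgHom ha) (one_sub_X_mul_invSqrtSeries_sq (K := K))
  rw [map_mul, map_sub, map_one, map_pow, substAlgHom_X, coe_substAlgHom] at h
  rw [mk_legendre]
  linear_combination h

lemma mul_rescale_invSqrtSeries_sq (e : K) :
    (1 - C e * X) * rescale e (invSqrtSeries K) ^ 2 = 1 := by
  simpa [rescale_X] using congrArg (rescale e) (one_sub_X_mul_invSqrtSeries_sq (K := K))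

lemma mk_legendre_eq_rescale_mul_rescale {e f t : K} (hef : e * f = 1) (ht : e + f = 2 * t) :
    mk (legendre · t) = rescale e (invSqrtSeries K) * rescale f (invSqrtSeries K) := by
  refine eq_of_mul_sq_eq_one (mul_mk_legendre_sq t) ?_ ?_
  · have hmul : (C e * C f : K⟦X⟧) = 1 := by rw [← map_mul, hef, map_one]
    have hadd : (C (2 * t) : K⟦X⟧) = C e + C f := by rw [← map_add, ht]
    calc (1 - C (2 * t) * X + X ^ 2) *
            (rescale e (invSqrtSeries K) * rescale f (invSqrtSeries K)) ^ 2
        = ((1 - C e * X) * rescale e (invSqrtSeries K) ^ 2) *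
            ((1 - C f * X) * rescale f (invSqrtSeries K) ^ 2) := by
          rw [hadd]
          linear_combination
            -(X * (rescale e (invSqrtSeries K) * rescale f (invSqrtSeries K))) ^ 2 * hmul
      _ = 1 := by rw [mul_rescale_invSqrtSeries_sq, mul_rescale_invSqrtSeries_sq, mul_one]
  · rw [map_mul]
    simp only [← coeff_zero_eq_constantCoeff_apply, coeff_rescale, coeff_mk]
    simp [legendre, invSqrtCoeff_zero, constantCoeff_invSqrtSeries]

lemma legendre_eq_sum_antidiagonal {e f t : K} (hef : e * f = 1) (ht : e + f = 2 * t) (n : ℕ) :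
    legendre n t =
      ∑ p ∈ antidiagonal n, (invSqrtCoeff K p.1 * e ^ p.1) * (invSqrtCoeff K p.2 * f ^ p.2) := by
  simpa [coeff_mul, coeff_rescale, invSqrtSeries, mul_comm] using
    congrArg (coeff n) (mk_legendre_eq_rescale_mul_rescale hef ht)

end GeneratingFunction

section LegendreSeries

open ComplexConjugate

lemma invSqrtCoeff_le_one (n : ℕ) : invSqrtCoeff ℝ n ≤ 1 :=
  div_le_one_of_le₀ (mod_cast n.centralBinom_le_four_pow) (by positivity)

lemma norm_invSqrtCoeff (n : ℕ) : ‖invSqrtCoeff ℂ n‖ = invSqrtCoeff ℝ n := by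
  simp [invSqrtCoeff]

lemma ofReal_legendre (n : ℕ) (t : ℝ) : ((legendre n t : ℝ) : ℂ) = legendre n (t : ℂ) := by
  simp [legendre, invSqrtCoeff]

lemma exists_norm_eq_one_and_add_conj_eq {t : ℝ} (ht : |t| ≤ 1) :
    ∃ e : ℂ, ‖e‖ = 1 ∧ e * conj e = 1 ∧ e + conj e = 2 * t := by
  obtain ⟨ht₁, ht₂⟩ := abs_le.1 ht
  have he : ‖Complex.exp (arccos t * Complex.I)‖ = 1 := Complex.norm_exp_ofReal_mul_I _
  refine ⟨_, he, ?_, ?_⟩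
  · rw [Complex.mul_conj, Complex.normSq_eq_norm_sq, he, one_pow, Complex.ofReal_one]
  · rw [Complex.add_conj, Complex.exp_ofReal_mul_I_re, cos_arccos ht₁ ht₂]
    norm_cast

lemma abs_legendre_le_one (n : ℕ) {t : ℝ} (ht : |t| ≤ 1) : |legendre n t| ≤ 1 := by
  obtain ⟨e, he, hmul, hadd⟩ := exists_norm_eq_one_and_add_conj_eq ht
  rw [← Real.norm_eq_abs, ← Complex.norm_real, ofReal_legendre,
    legendre_eq_sum_antidiagonal hmul hadd, ← sum_antidiagonal_invSqrtCoeff_mul (K := ℝ) n]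
  refine norm_sum_le_of_le _ fun p _ => ?_
  simp [he, norm_invSqrtCoeff]

lemma summable_norm_invSqrtCoeff_mul_pow {z : ℂ} (hz : ‖z‖ < 1) :
    Summable fun n => ‖invSqrtCoeff ℂ n * z ^ n‖ := by
  refine .of_nonneg_of_le (fun _ => norm_nonneg _) (fun n => ?_)
    (summable_geometric_of_lt_one (norm_nonneg z) hz)
  rw [norm_mul, norm_pow, norm_invSqrtCoeff]
  exact mul_le_of_le_one_left (by positivity) (invSqrtCoeff_le_one n)

lemma tsum_invSqrtCoeff_mul_pow_sq {z : ℂ} (hz : ‖z‖ < 1) :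
    (∑' n, invSqrtCoeff ℂ n * z ^ n) ^ 2 = (1 - z)⁻¹ := by
  have hs := summable_norm_invSqrtCoeff_mul_pow hz
  rw [sq, tsum_mul_tsum_eq_tsum_sum_antidiagonal_of_summable_norm hs hs,
    ← tsum_geometric_of_norm_lt_one hz]
  refine tsum_congr fun n => ?_
  rw [← one_mul (z ^ n), ← sum_antidiagonal_invSqrtCoeff_mul, Finset.sum_mul]
  refine Finset.sum_congr rfl fun p hp => ?_
  rw [← mem_antidiagonal.1 hp, pow_add]
  ring

lemma summable_legendre_mul_pow {x t : ℝ} (hx : |x| < 1) (ht : |t| ≤ 1) :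
    Summable fun n => legendre n t * x ^ n := by
  refine .of_norm_bounded (summable_geometric_of_lt_one (abs_nonneg x) hx) fun n => ?_
  rw [norm_mul, norm_pow, norm_eq_abs, norm_eq_abs]
  exact mul_le_of_le_one_left (by positivity) (abs_legendre_le_one n ht)

lemma ofReal_tsum_legendre_mul_pow {x t : ℝ} {e : ℂ} (hx : |x| < 1) (he : ‖e‖ = 1)
    (hmul : e * conj e = 1) (hadd : e + conj e = 2 * t) :
    ((∑' n, legendre n t * x ^ n : ℝ) : ℂ) =
      Complex.normSq (∑' n, invSqrtCoeff ℂ n * (x * e) ^ n) := by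
  have hz : ‖x * e‖ < 1 := by simpa [he] using hx
  have hz' : ‖x * conj e‖ < 1 := by simpa [he] using hx
  have hconj : conj (∑' n, invSqrtCoeff ℂ n * (x * e) ^ n) =
      ∑' n, invSqrtCoeff ℂ n * (x * conj e) ^ n := by
    rw [Complex.conj_tsum]
    simp [invSqrtCoeff, Complex.conj_ofNat]
  rw [← Complex.mul_conj, hconj, tsum_mul_tsum_eq_tsum_sum_antidiagonal_of_summable_norm
    (summable_norm_invSqrtCoeff_mul_pow hz) (summable_norm_invSqrtCoeff_mul_pow hz'),
    Complex.ofReal_tsum]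
  refine tsum_congr fun n => ?_
  rw [Complex.ofReal_mul, ofReal_legendre, legendre_eq_sum_antidiagonal hmul hadd,
    Complex.ofReal_pow, Finset.sum_mul]
  refine Finset.sum_congr rfl fun p hp => ?_
  rw [← mem_antidiagonal.1 hp, pow_add]
  ring

lemma hasSum_legendre_mul_pow {x t : ℝ} (hx : |x| < 1) (ht : |t| ≤ 1) :
    HasSum (fun n => legendre n t * x ^ n) (1 / √(1 - 2 * t * x + x ^ 2)) := by
  obtain ⟨e, he, hmul, hadd⟩ := exists_norm_eq_one_and_add_conj_eq ht
  have hz : ‖x * e‖ < 1 := by simpa [he] using hx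
  have hsum := ofReal_tsum_legendre_mul_pow hx he hmul hadd
  have hnormSq : Complex.normSq (1 - x * e) = 1 - 2 * t * x + x ^ 2 := by
    apply Complex.ofReal_injective
    rw [← Complex.mul_conj]
    push_cast
    simp only [map_sub, map_one, map_mul, Complex.conj_ofReal]
    linear_combination (x : ℂ) ^ 2 * hmul - x * hadd
  have hsq : (∑' n, legendre n t * x ^ n) ^ 2 = (1 - 2 * t * x + x ^ 2)⁻¹ := by
    rw [Complex.ofReal_injective hsum, ← map_pow, tsum_invSqrtCoeff_mul_pow_sq hz, map_inv₀,
      hnormSq]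
  have hnonneg : 0 ≤ ∑' n, legendre n t * x ^ n := by
    rw [Complex.ofReal_injective hsum]
    exact Complex.normSq_nonneg _
  rw [one_div, ← sqrt_inv, ← hsq, sqrt_sq hnonneg]
  exact (summable_legendre_mul_pow hx ht).hasSum

open MeasureTheory in
lemma hasSum_integral_mul_legendre_mul_pow {α : Type*} [MeasurableSpace α] {μ : Measure α}
    {w t : α → ℝ} {x : ℝ} (hx : |x| < 1) (hw : Integrable w μ) (ht : Measurable t)
    (ht1 : ∀ a, |t a| ≤ 1) :
    HasSum (fun n => (∫ a, w a * legendre n (t a) ∂μ) * x ^ n)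
      (∫ a, w a / √(1 - 2 * t a * x + x ^ 2) ∂μ) := by
  simp_rw [← integral_mul_const]
  refine hasSum_integral_of_dominated_convergence (fun n a => ‖w a‖ * |x| ^ n) (fun n => ?_)
    (fun n => .of_forall fun a => ?_) (.of_forall fun a => ?_) ?_ (.of_forall fun a => ?_)
  · have hmeas : Measurable fun a => legendre n (t a) := by unfold legendre; fun_prop
    exact (hw.aestronglyMeasurable.mul hmeas.aestronglyMeasurable).mul_const _
  · rw [norm_mul, norm_mul, norm_pow, norm_eq_abs x]
    gcongr
    exact mul_le_of_le_one_right (norm_nonneg _) (abs_legendre_le_one n (ht1 a))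
  · exact (summable_geometric_of_lt_one (abs_nonneg x) hx).mul_left _
  · simp_rw [tsum_mul_left]
    exact hw.norm.mul_const _
  · simpa only [mul_assoc, mul_one_div] using (hasSum_legendre_mul_pow hx (ht1 a)).mul_left (w a)

end LegendreSeries

section WalkCount

/-- The number of walks of length `N` on `ℤ` from `0` to `j` with steps `±1`, that is, the
coefficient of `zʲ` in `(z + z⁻¹) ^ N`. -/
def walkCount : ℕ → ℤ → ℕ
  | 0, j => if j = 0 then 1 else 0
  | N + 1, j => walkCount N (j - 1) + walkCount N (j + 1)

lemma walkCount_eq_zero_of_lt {N : ℕ} {j : ℤ} (h : N < j) : walkCount N j = 0 := by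
  induction N generalizing j with
  | zero => grind [walkCount]
  | succ N ih => rw [walkCount, ih (by lia), ih (by lia)]

lemma walkCount_eq_zero_of_not_two_dvd {N : ℕ} {j : ℤ} (h : ¬ 2 ∣ N - j) : walkCount N j = 0 := by
  induction N generalizing j with
  | zero => grind [walkCount]
  | succ N ih => rw [walkCount, ih (by lia), ih (by lia)]

lemma walkCount_sub_two_mul (N i : ℕ) : walkCount N (N - 2 * i) = N.choose i := by
  induction N generalizing i with
  | zero => cases i <;> grind [walkCount]
  | succ N ih =>
    have hright (i : ℕ) : ((N + 1 : ℕ) - 2 * (i + 1 : ℕ) + 1 : ℤ) = N - 2 * i := by lia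
    have hleft (i : ℕ) : ((N + 1 : ℕ) - 2 * i - 1 : ℤ) = N - 2 * i := by lia
    rw [walkCount, hleft, ih]
    cases i with
    | zero => rw [walkCount_eq_zero_of_lt (by lia)]; simp
    | succ i => rw [hright, ih, Nat.choose_succ_succ, add_comm]

lemma walkCount_add_eq_zero {k l N : ℕ} (h : ∀ i, N ≠ k + l + 2 * i) :
    walkCount N (k + l) = 0 := by
  rcases lt_or_ge N (k + l) with hlt | hle
  · exact walkCount_eq_zero_of_lt (by lia)
  · exact walkCount_eq_zero_of_not_two_dvd fun ⟨i, hi⟩ => h i.toNat (by lia)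

end WalkCount

section CosineMoments

open MeasureTheory

lemma integral_cos_int_mul (k : ℤ) : ∫ a in Set.Icc 0 π, cos (k * a) = if k = 0 then π else 0 := by
  rw [integral_Icc_eq_integral_Ioc, ← intervalIntegral.integral_of_le pi_pos.le]
  split_ifs with h
  · simp [h]
  · rw [intervalIntegral.integral_comp_mul_left (fun a => cos a) (Int.cast_ne_zero.2 h)]
    simp [sin_int_mul_pi]

lemma cos_mul_cos_mul_pow_succ (k l : ℤ) (a b : ℝ) (N : ℕ) :
    cos (k * a) * cos (l * b) * (cos a + cos b) ^ (N + 1) =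
      (cos ((k + 1 : ℤ) * a) * cos (l * b) * (cos a + cos b) ^ N +
        cos ((k - 1 : ℤ) * a) * cos (l * b) * (cos a + cos b) ^ N +
        cos (k * a) * cos ((l + 1 : ℤ) * b) * (cos a + cos b) ^ N +
        cos (k * a) * cos ((l - 1 : ℤ) * b) * (cos a + cos b) ^ N) / 2 := by
  push_cast
  simp only [add_mul, sub_mul, one_mul, cos_add, cos_sub, pow_succ]
  ring

lemma integral_cos_mul_cos_mul_pow (k l : ℤ) (N : ℕ) :
    ∫ p in Set.Icc (0 : ℝ × ℝ) (π, π), cos (k * p.1) * cos (l * p.2) * (cos p.1 + cos p.2) ^ N =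
      π ^ 2 / 2 ^ N * (walkCount N (k + l) * walkCount N (k - l)) := by
  induction N generalizing k l with
  | zero =>
    simp only [pow_zero, mul_one, walkCount]
    rw [← Prod.mk_zero_zero, ← Set.Icc_prod_Icc, Measure.volume_eq_prod,
      setIntegral_prod_mul (fun a => cos (k * a)) (fun b => cos (l * b)), integral_cos_int_mul,
      integral_cos_int_mul]
    split_ifs <;> first | lia | simp [sq]
  | succ N ih =>
    have hint (k l : ℤ) : IntegrableOn (fun p : ℝ × ℝ => cos (k * p.1) * cos (l * p.2) *
        (cos p.1 + cos p.2) ^ N) (Set.Icc (0 : ℝ × ℝ) (π, π)) :=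
      Continuous.integrableOn_Icc (by fun_prop)
    simp only [cos_mul_cos_mul_pow_succ, integral_div]
    rw [integral_add (((hint _ _).fun_add (hint _ _)).fun_add (hint _ _)) (hint _ _),
      integral_add ((hint _ _).fun_add (hint _ _)) (hint _ _), integral_add (hint _ _) (hint _ _),
      ih, ih, ih, ih, walkCount, walkCount, add_right_comm k 1, sub_add_eq_add_sub k 1,
      add_sub_right_comm k 1, sub_right_comm k 1, ← add_assoc, ← sub_sub,
      ← add_sub_assoc, ← sub_add]
    push_cast
    ring

end CosineMoments

section Rising

lemma rising_zero (a : ℝ) : rising a 0 = 1 := by simp [rising]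

lemma rising_add (a : ℝ) (m n : ℕ) : rising a (m + n) = rising a m * rising (a + m) n := by
  simp [rising, ← ascPochhammer_mul, Polynomial.eval_comp]

lemma rising_one (a : ℝ) : rising a 1 = a := by simp [rising]

lemma rising_succ (a : ℝ) (n : ℕ) : rising a (n + 1) = rising a n * (a + n) :=
  ascPochhammer_succ_eval n a

lemma rising_succ_left (a : ℝ) (n : ℕ) : rising a (n + 1) = a * rising (a + 1) n := by
  rw [add_comm n, rising_add, rising_one, Nat.cast_one]

lemma rising_pos {a : ℝ} (ha : 0 < a) (n : ℕ) : 0 < rising a n := ascPochhammer_pos n a ha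

lemma rising_half (n : ℕ) : rising (1 / 2) n = invSqrtCoeff ℝ n * n.factorial := by
  induction n with
  | zero => simp [rising_zero, invSqrtCoeff_zero]
  | succ n ih =>
    have h := succ_mul_invSqrtCoeff_succ (K := ℝ) n
    rw [rising_succ, ih, Nat.factorial_succ]
    push_cast
    linear_combination (-(n.factorial : ℝ)) * h

lemma factorial_mul_rising (n m : ℕ) : n.factorial * rising (n + 1) m = (n + m).factorial := by
  have h := factorial_mul_ascPochhammer ℝ n m
  rwa [← rising] at h

end Rising

section PfaffSaalschutz

/-- The terms of the terminating Saalschützian series `₃F₂(-m, a + m, b; c, d; 1)`, where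
`(-m)ᵢ / i!` is written as `(-1)ⁱ binom(m, i)`. -/
noncomputable def saalschutzTerm (a b c d : ℝ) (m i : ℕ) : ℝ :=
  (-1) ^ i * m.choose i * (rising (a + m) i * rising b i) / (rising c i * rising d i)

/-- The companion of `saalschutzTerm a b c d m` in the Wilf–Zeilberger method: the recurrence in
`m` holds termwise up to its forward difference. -/
noncomputable def saalschutzCert (a b c d : ℝ) (m : ℕ) : ℕ → ℝ
  | 0 => 0
  | i + 1 => (a + 2 * m + 1) * ((-1) ^ i * m.choose i * (rising (a + m + 1) i * rising b (i + 1)) /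
      (rising c i * rising d i))

lemma saalschutzTerm_recurrence {b c d : ℝ} (hc : ∀ n, rising c n ≠ 0) (hd : ∀ n, rising d n ≠ 0)
    (m i : ℕ) :
    (c + m) * (d + m) * saalschutzTerm (c + d - 1 - b) b c d (m + 1) i -
        (c - b + m) * (d - b + m) * saalschutzTerm (c + d - 1 - b) b c d m i =
      saalschutzCert (c + d - 1 - b) b c d m (i + 1) -
        saalschutzCert (c + d - 1 - b) b c d m i := by
  cases i with
  | zero =>
    simp only [saalschutzTerm, saalschutzCert, rising_zero, zero_add, rising_one,
      Nat.choose_zero_right]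
    push_cast
    ring
  | succ i =>
    have hci := hc i
    have hdi := hd i
    have hc' := hc (i + 1)
    have hd' := hd (i + 1)
    rw [rising_succ, mul_ne_zero_iff] at hc' hd'
    obtain ⟨-, hc'⟩ := hc'
    obtain ⟨-, hd'⟩ := hd'
    have hchoose : (i + 1) * (m.choose (i + 1) : ℝ) = (m - i) * m.choose i := by
      rcases le_or_gt i m with him | him
      · rw [← Nat.cast_sub him, mul_comm, mul_comm (_ - _ : ℕ).cast]
        exact_mod_cast m.choose_succ_right_eq i
      · simp [Nat.choose_eq_zero_of_lt him, Nat.choose_eq_zero_of_lt (him.trans i.lt_succ_self)]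
    simp only [saalschutzTerm, saalschutzCert]
    rw [Nat.choose_succ_succ, rising_succ b (i + 1), rising_succ b i, rising_succ c, rising_succ d,
      rising_succ_left (_ + (m : ℝ)), Nat.cast_succ m, ← add_assoc (_ - b), rising_succ _ i]
    push_cast
    set R := rising (c + d - 1 - b + m + 1) i
    set B := rising b i
    field_simp
    -- Both sides are affine in `binom(m, i)` and `binom(m, i + 1)`; eliminate the latter.
    linear_combination (-1) ^ (i + 1) * R * B * (b + i) * (c * d - (c + d) * (c + d - b + m) -
      (c + d - b) * (m + i) - m * (m + 2 * i)) * hchoose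

lemma sum_saalschutzTerm_succ {b c d : ℝ} (hc : ∀ n, rising c n ≠ 0) (hd : ∀ n, rising d n ≠ 0)
    (m : ℕ) :
    (c + m) * (d + m) *
        ∑ i ∈ Finset.range (m + 2), saalschutzTerm (c + d - 1 - b) b c d (m + 1) i =
      (c - b + m) * (d - b + m) *
        ∑ i ∈ Finset.range (m + 1), saalschutzTerm (c + d - 1 - b) b c d m i := by
  have hterm : saalschutzTerm (c + d - 1 - b) b c d m (m + 1) = 0 := by simp [saalschutzTerm]
  have hcert : saalschutzCert (c + d - 1 - b) b c d m (m + 2) = 0 := by simp [saalschutzCert]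
  have h := Finset.sum_congr rfl fun i (_ : i ∈ Finset.range (m + 2)) =>
    saalschutzTerm_recurrence hc hd m i (b := b)
  rw [Finset.sum_range_sub, hcert, Finset.sum_sub_distrib, ← Finset.mul_sum, ← Finset.mul_sum,
    Finset.sum_range_succ (saalschutzTerm _ _ _ _ m), hterm, add_zero, saalschutzCert,
    sub_zero] at h
  exact sub_eq_zero.1 h

theorem sum_saalschutzTerm {b c d : ℝ} (hc : ∀ n, rising c n ≠ 0) (hd : ∀ n, rising d n ≠ 0)
    (m : ℕ) :
    ∑ i ∈ Finset.range (m + 1), saalschutzTerm (c + d - 1 - b) b c d m i =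
      rising (c - b) m * rising (d - b) m / (rising c m * rising d m) := by
  induction m with
  | zero => simp [saalschutzTerm, rising_zero]
  | succ m ih =>
    rw [eq_div_iff (mul_ne_zero (hc _) (hd _))] at ih ⊢
    simp only [rising_succ _ m]
    linear_combination rising c m * rising d m * sum_saalschutzTerm_succ (b := b) hc hd m +
      (c - b + m) * (d - b + m) * ih

end PfaffSaalschutz

section LegendreMoments

open MeasureTheory

/-- The moment `∬ cos (kθ₁) cos (lθ₂) Pₙ((cos θ₁ + cos θ₂) / 2)` over `[0, π]²`, which is the
coefficient of `xⁿ` in `4 * Xi2 k l x`. -/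
noncomputable def legendreMoment (k l n : ℕ) : ℝ :=
  ∫ p in Set.Icc (0 : ℝ × ℝ) (π, π),
    cos (k * p.1) * cos (l * p.2) * legendre n ((cos p.1 + cos p.2) / 2)

lemma legendreMoment_eq_sum (k l n : ℕ) :
    legendreMoment k l n =
      π ^ 2 * ∑ p ∈ antidiagonal n, (-1) ^ p.2 * invSqrtCoeff ℝ p.1 * p.1.choose p.2 *
        (walkCount (p.1 - p.2) (k + l) * walkCount (p.1 - p.2) (k - l) / 2 ^ (p.1 - p.2)) := by
  have hint (c : ℝ) (N : ℕ) : IntegrableOn (fun p : ℝ × ℝ => c * (cos (k * p.1) * cos (l * p.2) *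
      (cos p.1 + cos p.2) ^ N)) (Set.Icc (0 : ℝ × ℝ) (π, π)) :=
    Continuous.integrableOn_Icc (by fun_prop)
  simp only [legendreMoment, legendre, mul_div_cancel₀ _ (two_ne_zero' ℝ), Finset.mul_sum,
    mul_left_comm (cos _ * cos _)]
  rw [integral_finsetSum _ fun p _ => hint _ _]
  refine Finset.sum_congr rfl fun p _ => ?_
  have h := integral_cos_mul_cos_mul_pow k l (p.1 - p.2)
  simp only [Int.cast_natCast] at h
  rw [integral_const_mul, h]
  ring

lemma legendreMoment_eq_zero {k l n : ℕ} (hn : ∀ m, n ≠ k + l + 2 * m) :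
    legendreMoment k l n = 0 := by
  rw [legendreMoment_eq_sum, Finset.sum_eq_zero, mul_zero]
  intro p hp
  rw [mem_antidiagonal] at hp
  rcases lt_or_ge p.1 p.2 with hlt | hle
  · simp [Nat.choose_eq_zero_of_lt hlt]
  · rw [walkCount_add_eq_zero fun i hi => hn (p.2 + i) (by lia)]
    simp

lemma legendreMoment_add_two_mul_eq_sum (k l m : ℕ) :
    legendreMoment k l (k + l + 2 * m) =
      π ^ 2 * ∑ p ∈ antidiagonal m, (-1) ^ p.2 * invSqrtCoeff ℝ (k + l + m + p.1) *
        (k + l + m + p.1).choose p.2 * ((k + l + 2 * p.1).choose p.1 *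
          (k + l + 2 * p.1).choose (l + p.1) / 2 ^ (k + l + 2 * p.1)) := by
  rw [legendreMoment_eq_sum]
  congr 1
  symm
  refine Finset.sum_of_injOn (fun p => (k + l + m + p.1, p.2)) ?_ ?_ ?_ ?_
  · exact fun p _ q _ h => by ext <;> grind
  · exact fun p hp => by simp only [Finset.mem_coe, mem_antidiagonal] at hp ⊢; lia
  · intro p hp hp'
    rw [mem_antidiagonal] at hp
    rcases lt_or_ge p.1 p.2 with hlt | hle
    · simp [Nat.choose_eq_zero_of_lt hlt]
    · rw [walkCount_add_eq_zero]
      · simp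
      · refine fun i hi => hp' ⟨(i, p.2), ?_, ?_⟩
        · simp only [SetLike.mem_coe, mem_antidiagonal]; lia
        · ext <;> dsimp only; lia
  · intro p hp
    rw [mem_antidiagonal] at hp
    have hN : k + l + m + p.1 - p.2 = k + l + 2 * p.1 := by lia
    have hadd : (k + l : ℤ) = (k + l + 2 * p.1 : ℕ) - 2 * p.1 := by lia
    have hsub : (k - l : ℤ) = (k + l + 2 * p.1 : ℕ) - 2 * (l + p.1 : ℕ) := by lia
    simp only [hN]
    rw [hadd, hsub, walkCount_sub_two_mul, walkCount_sub_two_mul]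

end LegendreMoments

section ClosedForm

lemma two_pow_mul_invSqrtCoeff {N q : ℕ} (hN : N ≤ 2 * q) (hq : 2 * q ≤ N + 1) :
    2 ^ N * invSqrtCoeff ℝ q = N.choose q := by
  have h4 : (4 : ℝ) ^ q = 2 ^ (2 * q) := by rw [pow_mul]; norm_num
  rw [invSqrtCoeff, h4]
  rcases hN.eq_or_lt with rfl | hlt
  · rw [Nat.centralBinom]
    field
  · obtain ⟨r, rfl⟩ : ∃ r, q = r + 1 := ⟨q - 1, by lia⟩
    obtain rfl : N = 2 * r + 1 := by lia
    rw [Nat.centralBinom, mul_add_one, Nat.choose_succ_succ, ← Nat.choose_symm_half]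
    push_cast
    field

lemma two_pow_mul_rising_half {k l : ℕ} (hk : k ≤ l) (hl : l ≤ k + 1) :
    2 ^ (k + l) * rising (1 / 2) l * k.factorial = (k + l).factorial := by
  rw [rising_half, ← mul_assoc, two_pow_mul_invSqrtCoeff (by lia) (by lia), mul_right_comm]
  exact_mod_cast Nat.add_choose_mul_factorial_mul_factorial k l

lemma legendreMoment_summand_eq {k l : ℕ} (hk : k ≤ l) (hl : l ≤ k + 1) {i r m : ℕ}
    (hm : i + r = m) :
    (-1) ^ r * invSqrtCoeff ℝ (k + l + m + i) * (k + l + m + i).choose r *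
        ((k + l + 2 * i).choose i * (k + l + 2 * i).choose (l + i) / 2 ^ (k + l + 2 * i)) =
      (-1) ^ m * (rising (1 / 2) (k + l) * rising (1 / 2) l * rising (k + l + 1 / 2) m) /
        ((k + l).factorial * l.factorial * m.factorial) *
        saalschutzTerm ((l + 1) + (k + l + 1) - 1 - (l + 1 / 2)) (l + 1 / 2) (l + 1) (k + l + 1)
          m i := by
  subst hm
  rw [← two_pow_mul_invSqrtCoeff (q := l + i) (by lia) (by lia)]
  have hpos := rising_pos (a := (l : ℝ) + 1) (by positivity) i
  have hpos' := rising_pos (a := (k + l : ℝ) + 1) (by positivity) i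
  have hg (n : ℕ) : invSqrtCoeff ℝ n = rising (1 / 2) n / n.factorial := by
    rw [rising_half, mul_div_cancel_right₀ _ (by positivity)]
  have hchoose : ((k + l + (i + r) + i).choose r : ℝ) =
      (k + l + (i + r) + i).factorial / (r.factorial * (k + l + 2 * i).factorial) := by
    rw [show k + l + (i + r) + i = r + (k + l + 2 * i) by ring, Nat.cast_add_choose]
  have hchoose' : ((k + l + 2 * i).choose i : ℝ) =
      (k + l + 2 * i).factorial / (i.factorial * ((k + l).factorial * rising (k + l + 1) i)) := by
    rw [show k + l + 2 * i = i + (k + l + i) by ring, Nat.cast_add_choose,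
      ← factorial_mul_rising (k + l) i]
    push_cast
    rfl
  have hrising : rising (1 / 2) (k + l + (i + r) + i) = rising (1 / 2) (k + l) *
      rising (k + l + 1 / 2) (i + r) * rising (k + l + 1 / 2 + (i + r : ℕ)) i := by
    rw [rising_add, rising_add]
    push_cast
    ring_nf
  have hsign : (-1 : ℝ) ^ r = (-1) ^ (i + r) * (-1) ^ i := by
    rw [add_comm i, pow_add, mul_assoc, ← mul_pow, neg_one_mul, neg_neg, one_pow, mul_one]
  rw [hg, hg, hchoose, hchoose', hrising, hsign, rising_add _ l, ← factorial_mul_rising l i,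
    saalschutzTerm, Nat.cast_add_choose,
    show (l + 1 + (k + l + 1) - 1 - (l + 1 / 2) : ℝ) = k + l + 1 / 2 by ring,
    add_comm (1 / 2 : ℝ) l]
  field

lemma legendreMoment_add_two_mul {k l : ℕ} (hk : k ≤ l) (hl : l ≤ k + 1) (m : ℕ) :
    legendreMoment k l (k + l + 2 * m) =
      π ^ 2 * rising (1 / 2) (k + l) / (2 ^ (k + l) * k.factorial * l.factorial) *
        ((-1) ^ m * (rising (1 / 2) m * rising (k + 1 / 2) m * rising (k + l + 1 / 2) m /
          (rising (l + 1) m * rising (k + l + 1) m * m.factorial))) := by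
  have hc (n : ℕ) : rising (l + 1) n ≠ 0 := (rising_pos (by positivity) n).ne'
  have hd (n : ℕ) : rising (k + l + 1) n ≠ 0 := (rising_pos (by positivity) n).ne'
  have hsum := sum_saalschutzTerm (b := l + 1 / 2) hc hd m
  rw [show (l + 1 - (l + 1 / 2) : ℝ) = 1 / 2 by ring,
    show (k + l + 1 - (l + 1 / 2) : ℝ) = k + 1 / 2 by ring] at hsum
  rw [legendreMoment_add_two_mul_eq_sum,
    Finset.sum_congr rfl fun p hp => legendreMoment_summand_eq hk hl (mem_antidiagonal.1 hp),
    ← Finset.mul_sum, Finset.Nat.sum_antidiagonal_eq_sum_range_succ_mk, hsum,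
    ← two_pow_mul_rising_half hk hl]
  have := hc m
  have := hd m
  have := (rising_pos (a := 1 / 2) (by positivity) l).ne'
  field

end ClosedForm

section PowerSeriesExpansion

open MeasureTheory

lemma one_sub_two_mul_mul_add_sq_pos {t x : ℝ} (hx : |x| < 1) (ht : |t| ≤ 1) :
    0 < 1 - 2 * t * x + x ^ 2 := by
  have htx : t * x ≤ |x| := by
    calc t * x ≤ |t| * |x| := abs_mul t x ▸ le_abs_self _
      _ ≤ |x| := mul_le_of_le_one_left (abs_nonneg x) ht
  nlinarith [sq_abs x, sq_pos_of_pos (sub_pos.2 hx)]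

lemma abs_cos_add_cos_div_two_le_one (a b : ℝ) : |(cos a + cos b) / 2| ≤ 1 := by
  rw [abs_div, abs_two]
  linarith [abs_add_le (cos a) (cos b), abs_cos_le_one a, abs_cos_le_one b]

lemma Xi2_eq_setIntegral (k l : ℕ) {x : ℝ} (hx : |x| < 1) :
    Xi2 k l x = 1 / 4 * ∫ p in Set.Icc (0 : ℝ × ℝ) (π, π), cos (k * p.1) * cos (l * p.2) /
      √(1 - 2 * ((cos p.1 + cos p.2) / 2) * x + x ^ 2) := by
  rw [← Prod.mk_zero_zero, ← Set.Icc_prod_Icc, Measure.volume_eq_prod, setIntegral_prod, Xi2,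
    intervalIntegral.integral_of_le pi_pos.le, ← integral_Icc_eq_integral_Ioc]
  · congr! 3 with _
    rw [intervalIntegral.integral_of_le pi_pos.le, ← integral_Icc_eq_integral_Ioc]
    congr! 4
    ring
  · rw [Set.Icc_prod_Icc]
    refine Continuous.integrableOn_Icc (.div (by fun_prop) (by fun_prop) fun p => ?_)
    exact (sqrt_pos.2 (one_sub_two_mul_mul_add_sq_pos hx
      (abs_cos_add_cos_div_two_le_one p.1 p.2))).ne'

lemma hasSum_legendreMoment_mul_pow (k l : ℕ) {x : ℝ} (hx : |x| < 1) :
    HasSum (fun n => legendreMoment k l n * x ^ n) (4 * Xi2 k l x) := by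
  rw [Xi2_eq_setIntegral k l hx, one_div, mul_inv_cancel_left₀ four_ne_zero]
  exact hasSum_integral_mul_legendre_mul_pow
    (w := fun p : ℝ × ℝ => cos (k * p.1) * cos (l * p.2))
    (t := fun p => (cos p.1 + cos p.2) / 2) hx (Continuous.integrableOn_Icc (by fun_prop))
    (by fun_prop) fun p => abs_cos_add_cos_div_two_le_one p.1 p.2

theorem hasSum_Xi2 {k l : ℕ} (hk : k ≤ l) (hl : l ≤ k + 1) {x : ℝ} (hx : |x| < 1) :
    HasSum (fun m : ℕ => π ^ 2 * rising (1 / 2) (k + l) * (2 * x) ^ (k + l) /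
        (4 ^ (k + l + 1) * (k.factorial : ℝ) * (l.factorial : ℝ)) *
          (rising (1 / 2) m * rising (k + 1 / 2) m * rising (k + l + 1 / 2) m /
            (rising (l + 1) m * rising (k + l + 1) m * m.factorial) * (-x ^ 2) ^ m))
      (Xi2 k l x) := by
  have hsum := (hasSum_legendreMoment_mul_pow k l hx).mul_left (1 / 4)
  rw [one_div, inv_mul_cancel_left₀ four_ne_zero] at hsum
  have hinj : Function.Injective fun m => k + l + 2 * m := fun _ _ h => by grind
  rw [← hinj.hasSum_iff] at hsum
  · refine hsum.congr_fun fun m => ?_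
    have h4 : (4 : ℝ) ^ (k + l + 1) = 4 * (2 ^ (k + l) * 2 ^ (k + l)) := by
      rw [pow_succ, ← mul_pow]; norm_num [mul_comm]
    rw [Function.comp_apply, legendreMoment_add_two_mul hk hl, h4, mul_pow,
      pow_add x (k + l), pow_mul, neg_pow (x ^ 2)]
    field
  · intro n hn
    rw [legendreMoment_eq_zero fun m hm => hn ⟨m, hm.symm⟩, zero_mul, mul_zero]

end PowerSeriesExpansion

theorem Xi2_eq_clausen3F2_general (k₁ k₂ : ℕ) (hk : k₁ ≤ k₂) (hk1 : k₂ - k₁ ≤ 1)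
    (x : ℝ) (hx : |x| < 1) :
    Xi2 k₁ k₂ x =
      π ^ 2 * rising (1 / 2) (k₁ + k₂) * (2 * x) ^ (k₁ + k₂) /
          (4 ^ (k₁ + k₂ + 1) * (k₁.factorial : ℝ) * (k₂.factorial : ℝ)) *
        clausen3F2 (1 / 2) (k₁ + 1 / 2) (k₁ + k₂ + 1 / 2) (k₂ + 1) (k₁ + k₂ + 1) (-x ^ 2) := by
  rw [clausen3F2, ← tsum_mul_left]
  exact (hasSum_Xi2 hk (Nat.sub_le_iff_le_add'.1 hk1) hx).tsum_eq.symm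

theorem Xi2_eq_clausen3F2 (k₁ k₂ : ℕ) (hk : k₁ ≤ k₂) (hk1 : k₂ - k₁ ≤ 1)
    (x : ℝ) (hx0 : 0 ≤ x) (hx1 : x < 1) :
    Xi2 k₁ k₂ x =
      π ^ 2 * rising (1 / 2) (k₁ + k₂) * (2 * x) ^ (k₁ + k₂) /
          (4 ^ (k₁ + k₂ + 1) * (k₁.factorial : ℝ) * (k₂.factorial : ℝ)) *
        clausen3F2 (1 / 2) (k₁ + 1 / 2) (k₁ + k₂ + 1 / 2) (k₂ + 1) (k₁ + k₂ + 1) (-x ^ 2) :=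
  Xi2_eq_clausen3F2_general k₁ k₂ hk hk1 x (abs_lt.2 ⟨by linarith, hx1⟩)
end

section
/- For a nonnegative integer k and 0 < x < 1, the functions Ξ₂ satisfy the differential-difference relation (1/2)·(1/x + (1−x²) d/dx) Ξ₂^{[k,k+1]}(x) = (k + 1/4) Ξ₂^{[k,k]}(x) − (k + 3/4) Ξ₂^{[k+1,k+1]}(x). -/
open Real

/-!
Put `D = 1 + x² - x (cos θ₁ + cos θ₂)` and let `X s m n` be a quarter of the `(m, n)`-th cosine
coefficient of `D ^ (-s)`, so that `Ξ₂` is the case `s = 1/2`. Writing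
`D ^ (-s) = D * D ^ (-(s + 1))`, integrating by parts in `θ₂` and differentiating in `x` express
respectively `X s m n`, `n * X s m n` and the derivative of `X s m n` linearly through `X (s + 1)`
at `(m, n)` and its four neighbours. Around `(k, k + 1)` these relations close up: both sides of
the theorem are combinations of the values of `X (s + 1)` at `(k, k)`, `(k, k + 1)` and
`(k + 1, k + 1)`, and they agree.
-/

open MeasureTheory Set Function Topology

section Leibniz

variable {𝕜 X E : Type*} [RCLike 𝕜] [TopologicalSpace X] [T2Space X] [MeasurableSpace X]
  [OpensMeasurableSpace X] [NormedAddCommGroup E] [NormedSpace ℝ E] [NormedSpace 𝕜 E]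
  {μ : Measure X} [IsFiniteMeasureOnCompacts μ]

theorem hasDerivAt_setIntegral_of_continuousOn {K : Set X} (hK : IsCompact K) {U : Set 𝕜} {x : 𝕜}
    (hU : U ∈ 𝓝 x) {F F' : 𝕜 → X → E} (hF : ∀ y ∈ U, ContinuousOn (F y) K)
    (hF' : ContinuousOn (uncurry F') (U ×ˢ K))
    (hderiv : ∀ y ∈ U, ∀ p ∈ K, HasDerivAt (F · p) (F' y p) y) :
    HasDerivAt (fun y ↦ ∫ p in K, F y p ∂μ) (∫ p in K, F' x p ∂μ) x := by
  obtain ⟨V, hVx, hVU, hV⟩ := local_compact_nhds hU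
  obtain ⟨C, hC⟩ := (hV.prod hK).exists_bound_of_continuousOn (hF'.mono (prod_mono_left hVU))
  have hF'x : ContinuousOn (F' x) K :=
    hF'.comp (f := Prod.mk x) (by fun_prop) fun p hp ↦ ⟨mem_of_mem_nhds hU, hp⟩
  refine (hasDerivAt_integral_of_dominated_loc_of_deriv_le (bound := fun _ ↦ C) hVx ?_
    ((hF x (mem_of_mem_nhds hU)).integrableOn_compact hK)
    (hF'x.integrableOn_compact hK).aestronglyMeasurable ?_
    (integrableOn_const hK.measure_lt_top.ne) ?_).2
  · filter_upwards [hU] with y hy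
    exact ((hF y hy).integrableOn_compact hK).aestronglyMeasurable
  · exact ae_restrict_of_forall_mem hK.measurableSet fun p hp y hy ↦ hC (y, p) ⟨hy, hp⟩
  · exact ae_restrict_of_forall_mem hK.measurableSet fun p hp y hy ↦ hderiv y (hVU hy) p hp

end Leibniz

section Rectangle

variable {E : Type*} [NormedAddCommGroup E] {f : ℝ × ℝ → E}

theorem integrableOn_Icc_prod_Icc_of_continuous (hf : Continuous f) (a b c d : ℝ) :
    IntegrableOn f (Icc a b ×ˢ Icc c d) :=
  hf.continuousOn.integrableOn_compact (isCompact_Icc.prod isCompact_Icc)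

theorem intervalIntegral_intervalIntegral_eq_setIntegral [NormedSpace ℝ E] (hf : Continuous f)
    {a b c d : ℝ} (hab : a ≤ b) (hcd : c ≤ d) :
    ∫ s in a..b, ∫ t in c..d, f (s, t) = ∫ p in Icc a b ×ˢ Icc c d, f p := by
  rw [Measure.volume_eq_prod, setIntegral_prod _ (integrableOn_Icc_prod_Icc_of_continuous hf ..)]
  simp only [integral_Icc_eq_integral_Ioc, intervalIntegral.integral_of_le hab,
    intervalIntegral.integral_of_le hcd]

end Rectangle

section CosCoeff

/-- The (unnormalized) double cosine coefficient of index `(m, n)` of a function on the square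
`[0, π]²`. Integer indices make the product-to-sum formulas free of boundary cases. -/
noncomputable def cosCoeff (f : ℝ × ℝ → ℝ) (m n : ℤ) : ℝ :=
  ∫ θ₁ in 0..π, ∫ θ₂ in 0..π, cos (m * θ₁) * cos (n * θ₂) * f (θ₁, θ₂)

variable {f g : ℝ × ℝ → ℝ}

theorem cosCoeff_eq_setIntegral (hf : Continuous f) (m n : ℤ) :
    cosCoeff f m n = ∫ p in Icc 0 π ×ˢ Icc 0 π, cos (m * p.1) * cos (n * p.2) * f p :=
  intervalIntegral_intervalIntegral_eq_setIntegral
    (f := fun p ↦ cos (m * p.1) * cos (n * p.2) * f p) (by fun_prop) pi_nonneg pi_nonneg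

theorem cosCoeff_const_mul (c : ℝ) (f : ℝ × ℝ → ℝ) (m n : ℤ) :
    cosCoeff (fun p ↦ c * f p) m n = c * cosCoeff f m n := by
  simp only [cosCoeff, mul_left_comm _ c, intervalIntegral.integral_const_mul]

theorem cosCoeff_add (hf : Continuous f) (hg : Continuous g) (m n : ℤ) :
    cosCoeff (fun p ↦ f p + g p) m n = cosCoeff f m n + cosCoeff g m n := by
  rw [cosCoeff_eq_setIntegral (by fun_prop), cosCoeff_eq_setIntegral hf,
    cosCoeff_eq_setIntegral hg, ← integral_add]
  · simp only [mul_add]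
  all_goals exact integrableOn_Icc_prod_Icc_of_continuous (by fun_prop) ..

theorem cosCoeff_sub (hf : Continuous f) (hg : Continuous g) (m n : ℤ) :
    cosCoeff (fun p ↦ f p - g p) m n = cosCoeff f m n - cosCoeff g m n := by
  simp only [sub_eq_add_neg, ← neg_one_mul (g _), ← neg_one_mul (cosCoeff g _ _)]
  rw [cosCoeff_add hf (by fun_prop), cosCoeff_const_mul]

theorem cosCoeff_comp_swap (hf : Continuous f) (m n : ℤ) :
    cosCoeff (f ∘ Prod.swap) m n = cosCoeff f n m := by
  rw [cosCoeff_eq_setIntegral (by fun_prop), cosCoeff_eq_setIntegral hf, Measure.volume_eq_prod,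
    ← setIntegral_prod_swap]
  simp only [Prod.fst_swap, Prod.snd_swap, comp_apply, Prod.swap_swap, mul_comm (cos (m * _))]

theorem cosCoeff_cos_snd_mul (hf : Continuous f) (m n : ℤ) :
    cosCoeff (fun p ↦ cos p.2 * f p) m n =
      (cosCoeff f m (n - 1) + cosCoeff f m (n + 1)) / 2 := by
  simp only [cosCoeff_eq_setIntegral hf]
  rw [cosCoeff_eq_setIntegral (by fun_prop), ← integral_add, ← integral_div]
  · congr 1 with p
    push_cast
    simp only [sub_mul, add_mul, one_mul, cos_sub, cos_add]
    ring
  all_goals exact integrableOn_Icc_prod_Icc_of_continuous (by fun_prop) ..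

theorem cosCoeff_cos_fst_mul (hf : Continuous f) (m n : ℤ) :
    cosCoeff (fun p ↦ cos p.1 * f p) m n =
      (cosCoeff f (m - 1) n + cosCoeff f (m + 1) n) / 2 := by
  simpa only [cosCoeff_comp_swap hf] using
    (cosCoeff_comp_swap (f := fun p ↦ cos p.1 * f p) (by fun_prop) n m).symm.trans
      (cosCoeff_cos_snd_mul (f := f ∘ Prod.swap) (by fun_prop) n m)

theorem cosCoeff_cos_add_cos_mul (hf : Continuous f) (m n : ℤ) :
    cosCoeff (fun p ↦ (cos p.1 + cos p.2) * f p) m n =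
      (cosCoeff f (m - 1) n + cosCoeff f (m + 1) n + cosCoeff f m (n - 1)
        + cosCoeff f m (n + 1)) / 2 := by
  simp only [add_mul]
  rw [cosCoeff_add (by fun_prop) (by fun_prop), cosCoeff_cos_fst_mul hf, cosCoeff_cos_snd_mul hf]
  ring

theorem int_mul_integral_cos_mul_eq_integral_sin_mul {u u' : ℝ → ℝ} (hu' : Continuous u')
    (hu : ∀ t, HasDerivAt u (u' t) t) (n : ℤ) :
    n * ∫ t in 0..π, cos (n * t) * u t = -∫ t in 0..π, sin (n * t) * u' t := by
  have hsin (t : ℝ) : HasDerivAt (fun t ↦ sin (n * t)) (n * cos (n * t)) t := by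
    simpa [mul_comm] using ((hasDerivAt_id t).const_mul (n : ℝ)).sin
  have hparts := intervalIntegral.integral_mul_deriv_eq_deriv_mul (a := 0) (b := π)
    (fun t _ ↦ hsin t) (fun t _ ↦ hu t)
    (Continuous.intervalIntegrable (by fun_prop) _ _) (hu'.intervalIntegrable _ _)
  simp only [sin_int_mul_pi, mul_zero, sin_zero, zero_mul, sub_zero, zero_sub, mul_assoc,
    intervalIntegral.integral_const_mul] at hparts
  rw [hparts, neg_neg]

theorem integral_cos_mul_sin_mul_sin_mul (hg : Continuous g) (m n : ℤ) :
    ∫ θ₁ in 0..π, ∫ θ₂ in 0..π, cos (m * θ₁) * (sin (n * θ₂) * (sin θ₂ * g (θ₁, θ₂))) =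
      (cosCoeff g m (n - 1) - cosCoeff g m (n + 1)) / 2 := by
  rw [intervalIntegral_intervalIntegral_eq_setIntegral
      (f := fun p ↦ cos (m * p.1) * (sin (n * p.2) * (sin p.2 * g p))) (by fun_prop)
      pi_nonneg pi_nonneg,
    cosCoeff_eq_setIntegral hg, cosCoeff_eq_setIntegral hg, ← integral_sub, ← integral_div]
  · congr 1 with p
    push_cast
    simp only [sub_mul, add_mul, one_mul, cos_sub, cos_add]
    ring
  all_goals exact integrableOn_Icc_prod_Icc_of_continuous (by fun_prop) ..

theorem int_mul_cosCoeff_of_hasDerivAt_snd (hg : Continuous g)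
    (hf : ∀ a t, HasDerivAt (fun t ↦ f (a, t)) (-(sin t * g (a, t))) t) (m n : ℤ) :
    n * cosCoeff f m n = (cosCoeff g m (n - 1) - cosCoeff g m (n + 1)) / 2 := by
  have hparts (a : ℝ) : n * ∫ t in 0..π, cos (n * t) * f (a, t) =
      ∫ t in 0..π, sin (n * t) * (sin t * g (a, t)) := by
    rw [int_mul_integral_cos_mul_eq_integral_sin_mul (by fun_prop) (hf a)]
    simp only [mul_neg, intervalIntegral.integral_neg, neg_neg]
  rw [← integral_cos_mul_sin_mul_sin_mul hg]
  simp only [cosCoeff, mul_assoc, intervalIntegral.integral_const_mul, ← hparts,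
    mul_left_comm _ (n : ℝ)]

theorem hasDerivAt_cosCoeff {U : Set ℝ} {x : ℝ} (hU : U ∈ 𝓝 x) {F F' : ℝ → ℝ × ℝ → ℝ}
    (hF : ∀ y ∈ U, Continuous (F y)) (hF' : ContinuousOn (uncurry F') (U ×ˢ univ))
    (hderiv : ∀ y ∈ U, ∀ p, HasDerivAt (F · p) (F' y p) y) (m n : ℤ) :
    HasDerivAt (fun y ↦ cosCoeff (F y) m n) (cosCoeff (F' x) m n) x := by
  have hF'x : Continuous (F' x) := continuousOn_univ.1 <|
    hF'.comp (f := Prod.mk x) (by fun_prop) fun p _ ↦ ⟨mem_of_mem_nhds hU, mem_univ p⟩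
  rw [cosCoeff_eq_setIntegral hF'x]
  refine (hasDerivAt_setIntegral_of_continuousOn
    (F := fun y p ↦ cos (m * p.1) * cos (n * p.2) * F y p)
    (F' := fun y p ↦ cos (m * p.1) * cos (n * p.2) * F' y p)
    (isCompact_Icc.prod isCompact_Icc) hU
    (fun y hy ↦ ?_) ?_ fun y hy p _ ↦ (hderiv y hy p).const_mul _).congr_of_eventuallyEq ?_
  · have := hF y hy
    fun_prop
  · exact ContinuousOn.mul (by fun_prop) (hF'.mono (prod_mono_right (subset_univ _)))
  · filter_upwards [hU] with y hy
    exact cosCoeff_eq_setIntegral (hF y hy) m n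

end CosCoeff

section Kernel

/-- The quantity `D` under the square root in `Xi2`, as a function of `p = (θ₁, θ₂)`. -/
noncomputable def xiBase (x : ℝ) (p : ℝ × ℝ) : ℝ :=
  1 + x ^ 2 - x * (cos p.1 + cos p.2)

/-- The kernel `D ^ (-s)`; the kernel of `Xi2` is the case `s = 1 / 2`. -/
noncomputable def xiKernel (s x : ℝ) (p : ℝ × ℝ) : ℝ :=
  xiBase x p ^ (-s)

variable (s : ℝ) {x : ℝ}

theorem sq_one_sub_abs_le_xiBase (x : ℝ) (p : ℝ × ℝ) : (1 - |x|) ^ 2 ≤ xiBase x p := by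
  have hcos : |cos p.1 + cos p.2| ≤ 2 :=
    (abs_add_le _ _).trans (by linarith [abs_cos_le_one p.1, abs_cos_le_one p.2])
  have hx : x * (cos p.1 + cos p.2) ≤ |x| * 2 :=
    (le_abs_self _).trans (by rw [abs_mul]; gcongr)
  rw [xiBase, sub_sq, sq_abs]
  linarith

theorem xiBase_pos (hx : |x| ≠ 1) (p : ℝ × ℝ) : 0 < xiBase x p :=
  (sq_pos_of_ne_zero (sub_ne_zero.2 hx.symm)).trans_le (sq_one_sub_abs_le_xiBase x p)

theorem continuousOn_xiKernel :
    ContinuousOn (uncurry (xiKernel s)) ({x | |x| ≠ 1} ×ˢ univ) := by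
  refine ContinuousOn.rpow_const (f := uncurry xiBase) ?_ fun q hq ↦ .inl (xiBase_pos hq.1 q.2).ne'
  unfold uncurry xiBase
  fun_prop

theorem continuous_xiKernel (hx : |x| ≠ 1) : Continuous (xiKernel s x) :=
  continuousOn_univ.1 <|
    (continuousOn_xiKernel s).comp (f := Prod.mk x) (by fun_prop) fun p _ ↦ ⟨hx, mem_univ p⟩

theorem xiKernel_comp_swap (x : ℝ) : xiKernel s x ∘ Prod.swap = xiKernel s x := by
  ext p
  simp [xiKernel, xiBase, add_comm]

theorem xiKernel_eq_xiBase_mul (hx : |x| ≠ 1) (p : ℝ × ℝ) :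
    xiKernel s x p = xiBase x p * xiKernel (s + 1) x p := by
  rw [xiKernel, xiKernel, neg_add', rpow_sub_one (xiBase_pos hx p).ne',
    mul_div_cancel₀ _ (xiBase_pos hx p).ne']

theorem hasDerivAt_xiKernel_snd (hx : |x| ≠ 1) (a t : ℝ) :
    HasDerivAt (fun t ↦ xiKernel s x (a, t))
      (-(sin t * (s * x * xiKernel (s + 1) x (a, t)))) t := by
  have hbase : HasDerivAt (fun t ↦ xiBase x (a, t)) (x * sin t) t := by
    simpa [xiBase] using
      (((hasDerivAt_cos t).const_add (cos a)).const_mul x).const_sub (1 + x ^ 2)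
  refine (hbase.rpow_const (p := -s) (.inl (xiBase_pos hx _).ne')).congr_deriv ?_
  rw [xiKernel, neg_add']
  ring

theorem hasDerivAt_xiKernel (hx : |x| ≠ 1) (p : ℝ × ℝ) :
    HasDerivAt (fun y ↦ xiKernel s y p)
      (-s * ((2 * x - (cos p.1 + cos p.2)) * xiKernel (s + 1) x p)) x := by
  have hbase : HasDerivAt (fun y ↦ xiBase y p) (2 * x - (cos p.1 + cos p.2)) x := by
    simpa [xiBase] using ((hasDerivAt_pow 2 x).const_add 1).fun_sub
      ((hasDerivAt_id x).mul_const (cos p.1 + cos p.2))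
  refine (hbase.rpow_const (p := -s) (.inl (xiBase_pos hx p).ne')).congr_deriv ?_
  rw [xiKernel, neg_add']
  ring

end Kernel

/-- The function `Ξ₂^{[m,n]}` with the exponent `1 / 2` of the kernel replaced by `s` and the
indices allowed to be negative. -/
noncomputable def powXi2 (s : ℝ) (m n : ℤ) (x : ℝ) : ℝ :=
  1 / 4 * cosCoeff (xiKernel s x) m n

theorem Xi2_eq_powXi2 (k l : ℕ) : Xi2 k l = powXi2 (1 / 2) k l := by
  ext x
  have hkernel (p : ℝ × ℝ) : xiKernel (1 / 2) x p = (√(xiBase x p))⁻¹ := by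
    rw [xiKernel, rpow_neg ((sq_nonneg _).trans (sq_one_sub_abs_le_xiBase x p)), ← sqrt_eq_rpow]
  simp only [Xi2, powXi2, cosCoeff, hkernel, xiBase, div_eq_mul_inv (_ * _), Int.cast_natCast]

namespace powXi2

variable (s : ℝ) {x : ℝ}

protected theorem comm (hx : |x| ≠ 1) (m n : ℤ) : powXi2 s m n x = powXi2 s n m x := by
  rw [powXi2, powXi2, ← cosCoeff_comp_swap (continuous_xiKernel s hx), xiKernel_comp_swap]

theorem eq_sum_neighbors (hx : |x| ≠ 1) (m n : ℤ) :
    powXi2 s m n x = (1 + x ^ 2) * powXi2 (s + 1) m n x -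
      x / 2 * (powXi2 (s + 1) (m - 1) n x + powXi2 (s + 1) (m + 1) n x
        + powXi2 (s + 1) m (n - 1) x + powXi2 (s + 1) m (n + 1) x) := by
  have hK := continuous_xiKernel (s + 1) hx
  have hker : xiKernel s x = fun p ↦ (1 + x ^ 2) * xiKernel (s + 1) x p -
      x * ((cos p.1 + cos p.2) * xiKernel (s + 1) x p) := by
    ext p
    rw [xiKernel_eq_xiBase_mul s hx, xiBase]
    ring
  rw [powXi2, hker, cosCoeff_sub (by fun_prop) (by fun_prop), cosCoeff_const_mul,
    cosCoeff_const_mul, cosCoeff_cos_add_cos_mul hK]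
  simp only [powXi2]
  ring

theorem snd_mul_eq_sub_neighbors (hx : |x| ≠ 1) (m n : ℤ) :
    n * powXi2 s m n x =
      s * x / 2 * (powXi2 (s + 1) m (n - 1) x - powXi2 (s + 1) m (n + 1) x) := by
  have hK := continuous_xiKernel (s + 1) hx
  have hparts := int_mul_cosCoeff_of_hasDerivAt_snd
    (g := fun p ↦ s * x * xiKernel (s + 1) x p) (by fun_prop) (hasDerivAt_xiKernel_snd s hx) m n
  simp only [cosCoeff_const_mul] at hparts
  simp only [powXi2]
  linear_combination 1 / 4 * hparts

theorem fst_mul_eq_sub_neighbors (hx : |x| ≠ 1) (m n : ℤ) :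
    m * powXi2 s m n x =
      s * x / 2 * (powXi2 (s + 1) (m - 1) n x - powXi2 (s + 1) (m + 1) n x) := by
  simpa only [powXi2.comm _ hx n] using snd_mul_eq_sub_neighbors s hx n m

protected theorem hasDerivAt (hx : |x| ≠ 1) (m n : ℤ) :
    HasDerivAt (powXi2 s m n)
      (-s * (2 * x * powXi2 (s + 1) m n x -
        (powXi2 (s + 1) (m - 1) n x + powXi2 (s + 1) (m + 1) n x + powXi2 (s + 1) m (n - 1) x
          + powXi2 (s + 1) m (n + 1) x) / 2)) x := by
  have hK := continuous_xiKernel (s + 1) hx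
  have hU : {y : ℝ | |y| ≠ 1} ∈ 𝓝 x := (isOpen_ne_fun (by fun_prop) (by fun_prop)).mem_nhds hx
  have hleibniz := hasDerivAt_cosCoeff hU (fun y hy ↦ continuous_xiKernel s hy)
    (F' := fun y p ↦ -s * ((2 * y - (cos p.1 + cos p.2)) * xiKernel (s + 1) y p))
    (.mul (by fun_prop) (.mul (by fun_prop) (continuousOn_xiKernel (s + 1))))
    (fun y hy ↦ hasDerivAt_xiKernel s hy) m n
  refine (hleibniz.const_mul (1 / 4)).congr_deriv ?_
  simp only [sub_mul]
  rw [cosCoeff_const_mul, cosCoeff_sub (by fun_prop) (by fun_prop), cosCoeff_const_mul,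
    cosCoeff_cos_add_cos_mul hK]
  simp only [powXi2]
  ring

theorem self_mul_deriv (hx : |x| ≠ 1) (m n : ℤ) :
    x * deriv (powXi2 s m n) x =
      -s * (powXi2 s m n x - (1 - x ^ 2) * powXi2 (s + 1) m n x) := by
  rw [(powXi2.hasDerivAt s hx m n).deriv]
  linear_combination s * eq_sum_neighbors s hx m n

theorem diagonal_sub_succ_diagonal (hx : |x| ≠ 1) (k : ℤ) :
    (k + s / 2) * powXi2 s k k x - (k + 1 - s / 2) * powXi2 s (k + 1) (k + 1) x =
      s / 2 * (1 + x ^ 2) * (powXi2 (s + 1) k k x + powXi2 (s + 1) (k + 1) (k + 1) x) -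
        2 * s * x * powXi2 (s + 1) k (k + 1) x := by
  have hk := eq_sum_neighbors s hx k k
  have hl := eq_sum_neighbors s hx (k + 1) (k + 1)
  have hk' := snd_mul_eq_sub_neighbors s hx k k
  have hl' := snd_mul_eq_sub_neighbors s hx (k + 1) (k + 1)
  simp only [powXi2.comm _ hx (k - 1) k, powXi2.comm _ hx (k + 1) k, add_sub_cancel_right,
    powXi2.comm _ hx (k + 1 + 1) (k + 1)] at hk hl hl'
  push_cast at hl'
  linear_combination hk' - hl' + s / 2 * (hk + hl)

theorem sub_one_mul_superdiagonal (hx : |x| ≠ 1) (k : ℤ) :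
    (s - 1) * powXi2 s k (k + 1) x =
      s * ((1 + x ^ 2) * powXi2 (s + 1) k (k + 1) x -
        x * (powXi2 (s + 1) k k x + powXi2 (s + 1) (k + 1) (k + 1) x)) := by
  have hsum := eq_sum_neighbors s hx k (k + 1)
  have hfst := fst_mul_eq_sub_neighbors s hx k (k + 1)
  have hsnd := snd_mul_eq_sub_neighbors s hx k (k + 1)
  simp only [add_sub_cancel_right] at hsum hsnd
  push_cast at hsnd
  -- As `(k + 1) - k = 1`, subtracting `hfst` from `hsnd` gives `powXi2 s k (k + 1) x` without any
  -- factor; the result involves `(k - 1, k + 1)` and `(k, k + 2)` only through the sum in `hsum`.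
  linear_combination s * hsum - hsnd + hfst

end powXi2

theorem Xi2_diff_difference_general (s : ℝ) (k : ℤ) {x : ℝ} (hx0 : x ≠ 0) (hx1 : |x| ≠ 1) :
    1 / 2 * ((1 + (1 - 2 * s) * x ^ 2) / x * powXi2 s k (k + 1) x +
        (1 - x ^ 2) * deriv (powXi2 s k (k + 1)) x) =
      (k + s / 2) * powXi2 s k k x - (k + 1 - s / 2) * powXi2 s (k + 1) (k + 1) x := by
  rw [powXi2.diagonal_sub_succ_diagonal s hx1]
  field_simp
  linear_combination (1 - x ^ 2) * powXi2.self_mul_deriv s hx1 k (k + 1) -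
    (1 + x ^ 2) * powXi2.sub_one_mul_superdiagonal s hx1 k

theorem Xi2_diff_difference (k : ℕ) (x : ℝ) (hx0 : 0 < x) (hx1 : x < 1) :
    (1 / 2) * (1 / x * Xi2 k (k + 1) x + (1 - x ^ 2) * deriv (Xi2 k (k + 1)) x) =
      ((k : ℝ) + 1 / 4) * Xi2 k k x - ((k : ℝ) + 3 / 4) * Xi2 (k + 1) (k + 1) x := by
  simp only [Xi2_eq_powXi2]
  linear_combination (norm := (push_cast; ring1))
    Xi2_diff_difference_general (1 / 2) k hx0.ne' (abs_lt.2 ⟨by linarith, hx1⟩).ne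
end
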